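/- Let m ∈ (0,1), κ ≥ 1, θ > 0, α ∈ (0,1], q ≥ 2, and suppose s < max{1/2 − m/4, 1/2 − mα/q}. Let μ be the Borel measure on ℝ given by dμ(x) = |x|^{α−1} dx restricted to (0,1). Then there is NO constant C > 0 such that (∫ (sup_{t∈(0,1)} |u_f(x − θ t^κ, t)|)^q dμ(x))^{1/q} ≤ C ‖f‖_{H^s} holds for every Schwartz function f : ℝ → ℂ. -/

import Mathlib

open MeasureTheory Filter Set
open scoped ENNReal NNReal

/-- Fourier transform `f̂(ξ) = ∫ e^{-ixξ} f(x) dx`. -/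
noncomputable def FT (f : ℝ → ℂ) (ξ : ℝ) : ℂ :=
  ∫ x : ℝ, Complex.exp (-(Complex.I * (x : ℂ) * (ξ : ℂ))) * f x

/-- Sobolev norm `‖f‖_{H^s} = (∫ (1+ξ²)^s |f̂(ξ)|² dξ)^{1/2}` (as an extended nonnegative real). -/
noncomputable def HsNorm (s : ℝ) (f : ℝ → ℂ) : ℝ≥0∞ :=
  (∫⁻ ξ : ℝ, ENNReal.ofReal ((1 + ξ ^ 2) ^ s) * (‖FT f ξ‖₊ : ℝ≥0∞) ^ 2) ^ (1/2 : ℝ)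

/-- Truncated fractional Schrödinger wave
`S_R f(y,t) = (2π)⁻¹ ∫_{|ξ|≤R} e^{i(yξ + t|ξ|^m)} f̂(ξ) dξ`. -/
noncomputable def SR (m : ℝ) (f : ℝ → ℂ) (R y t : ℝ) : ℂ :=
  ((2 * Real.pi)⁻¹ : ℝ) *
    ∫ ξ in Set.Icc (-R) R, Complex.exp (Complex.I * ((y * ξ + t * |ξ| ^ m : ℝ) : ℂ)) * FT f ξ

/-- Fractional Schrödinger evolution
`u_f(y,t) = e^{it(−Δ)^{m/2}}f(y) = (2π)⁻¹ ∫ e^{i(yξ + t|ξ|^m)} f̂(ξ) dξ`. -/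
noncomputable def uF (m : ℝ) (f : ℝ → ℂ) (y t : ℝ) : ℂ :=
  ((2 * Real.pi)⁻¹ : ℝ) *
    ∫ ξ : ℝ, Complex.exp (Complex.I * ((y * ξ + t * |ξ| ^ m : ℝ) : ℂ)) * FT f ξ

/-!
Test the estimate on wave packets: `f̂` is a bump of width `b` around a large frequency `l`, modulated
so that the evolution focuses at time `t₀` on the curve. Relative to the focus, the phase seen at
`(x - g t, t)` is `(x - g t + g t₀) ξ + (t - t₀) |ξ|^m`. Since `m < 1`, the group velocity
`m l^(m-1)` is negligible against the slope of the curve, so every `x ∈ (0, r)` has a time `t` with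
`|t - t₀| ≲ r` at which the phase is stationary at `ξ = l`. There it varies by `O(r l^(m-2) b²)`; as
long as this is `O(1)` the maximal function is `≳ b` on `(0, r)`, while `‖f‖_{H^s} ≈ l^s √b`. This
forces `√b · r^(α/q) ≲ l^s`, and the two obstructions are the extreme choices `r ≈ 1`,
`b ≈ l^(1-m/2)` and `r ≈ l^(-m)`, `b ≈ l`.
-/

open scoped Topology

section RealPowers

theorem rpow_le_rpow_abs {w K s : ℝ} (hw : K⁻¹ ≤ w) (hwK : w ≤ K) (hK : 0 < K) :
    w ^ s ≤ K ^ |s| := by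
  have hw₀ : 0 < w := (inv_pos.2 hK).trans_le hw
  rcases le_total 0 s with hs | hs
  · rw [abs_of_nonneg hs]
    exact Real.rpow_le_rpow hw₀.le hwK hs
  · calc w ^ s = w⁻¹ ^ |s| := by rw [abs_of_nonpos hs, Real.inv_rpow hw₀.le, Real.rpow_neg hw₀.le,
          inv_inv]
      _ ≤ K ^ |s| := Real.rpow_le_rpow (by positivity) (inv_le_of_inv_le₀ hK hw) (abs_nonneg s)

theorem one_add_sq_rpow_le {a ξ : ℝ} (s : ℝ) (ha : 1 ≤ a) (hξ : |ξ - a| ≤ a / 2) :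
    (1 + ξ ^ 2) ^ s ≤ 5 ^ |s| * a ^ (2 * s) := by
  obtain ⟨hξ₁, hξ₂⟩ := abs_le.1 hξ
  have ha₀ : 0 < a := by linarith
  have hlow : 5⁻¹ ≤ (1 + ξ ^ 2) / a ^ 2 := by
    rw [le_div_iff₀ (by positivity)]
    nlinarith
  have hup : (1 + ξ ^ 2) / a ^ 2 ≤ 5 := by
    rw [div_le_iff₀ (by positivity)]
    nlinarith
  calc (1 + ξ ^ 2) ^ s = ((1 + ξ ^ 2) / a ^ 2) ^ s * (a ^ 2) ^ s := by
        rw [← Real.mul_rpow (by positivity) (by positivity), div_mul_cancel₀ _ (by positivity)]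
    _ ≤ 5 ^ |s| * (a ^ 2) ^ s := by
        gcongr
        exact rpow_le_rpow_abs hlow hup (by norm_num)
    _ = 5 ^ |s| * a ^ (2 * s) := by rw [Real.rpow_mul ha₀.le, Real.rpow_two]

theorem abs_one_add_rpow_sub_le {m z : ℝ} (hm : 0 ≤ m) (hm1 : m ≤ 1) (hz : |z| ≤ 1 / 2) :
    |(1 + z) ^ m - 1 - m * z| ≤ z ^ 2 := by
  obtain ⟨hz₁, hz₂⟩ := abs_le.1 hz
  have hupper : (1 + z) ^ m ≤ 1 + m * z :=
    rpow_one_add_le_one_add_mul_self (by linarith) hm hm1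
  have hcompl : (1 + z) ^ (1 - m) ≤ 1 + (1 - m) * z :=
    rpow_one_add_le_one_add_mul_self (by linarith) (by linarith) (by linarith)
  have hpos : 1 / 2 ≤ 1 + (1 - m) * z := by nlinarith
  -- Bernoulli for the complementary exponent `1 - m` bounds `(1 + z) ^ m` from below.
  have hlower : 1 + z ≤ (1 + z) ^ m * (1 + (1 - m) * z) := by
    calc 1 + z = (1 + z) ^ m * (1 + z) ^ (1 - m) := by
          rw [← Real.rpow_add (by linarith), add_sub_cancel, Real.rpow_one]
      _ ≤ (1 + z) ^ m * (1 + (1 - m) * z) := by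
          gcongr
          exact Real.rpow_nonneg (by linarith) m
  have hm4 : m * (1 - m) ≤ 1 / 4 := by nlinarith [sq_nonneg (m - 1 / 2)]
  rw [abs_le]
  constructor <;> nlinarith [sq_nonneg z, mul_le_mul_of_nonneg_right hm4 (sq_nonneg z),
    mul_le_mul_of_nonneg_right hpos (sq_nonneg z)]

theorem abs_rpow_sub_tangent_le {m l ξ : ℝ} (hm : 0 ≤ m) (hm1 : m ≤ 1) (hl : 0 < l)
    (hξ : |ξ - l| ≤ l / 2) :
    |ξ ^ m - l ^ m - m * l ^ (m - 1) * (ξ - l)| ≤ l ^ (m - 2) * (ξ - l) ^ 2 := by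
  set z := (ξ - l) / l with hz
  have hξz : ξ - l = l * z := by rw [hz, mul_div_cancel₀ _ hl.ne']
  have hzabs : |z| ≤ 1 / 2 := by
    rw [hz, abs_div, abs_of_pos hl, div_le_iff₀ hl]
    linarith
  have hpow : ξ ^ m = l ^ m * (1 + z) ^ m := by
    rw [← Real.mul_rpow hl.le (by linarith [abs_le.1 hzabs]), mul_add, mul_one, ← hξz,
      add_sub_cancel]
  have hl1 : l ^ (m - 1) * l = l ^ m := by rw [Real.rpow_sub_one hl.ne', div_mul_cancel₀ _ hl.ne']
  have hl2 : l ^ (m - 2) * l ^ 2 = l ^ m := by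
    rw [← Real.rpow_two, ← Real.rpow_add hl, sub_add_cancel]
  calc |ξ ^ m - l ^ m - m * l ^ (m - 1) * (ξ - l)|
      = l ^ m * |(1 + z) ^ m - 1 - m * z| := by
        rw [← abs_of_pos (Real.rpow_pos_of_pos hl m), ← abs_mul,
          abs_of_pos (Real.rpow_pos_of_pos hl m), hpow, hξz, ← hl1]
        ring_nf
    _ ≤ l ^ m * z ^ 2 := by gcongr; exact abs_one_add_rpow_sub_le hm hm1 hzabs
    _ = l ^ (m - 2) * (ξ - l) ^ 2 := by rw [hξz, ← hl2]; ring

theorem le_of_eventually_rpow_le {D K p s : ℝ} (hD : 0 < D)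
    (h : ∀ᶠ l : ℝ in atTop, D * l ^ p ≤ K * l ^ s) : p ≤ s := by
  by_contra! hsp
  have hgrow : ∀ᶠ l : ℝ in atTop, K / D < l ^ (p - s) :=
    (tendsto_rpow_atTop (sub_pos.2 hsp)).eventually_gt_atTop _
  obtain ⟨l, hle, hlt, hl⟩ := (h.and (hgrow.and (eventually_gt_atTop 0))).exists
  rw [div_lt_iff₀ hD, Real.rpow_sub hl, div_mul_eq_mul_div, lt_div_iff₀ (by positivity)] at hlt
  linarith

end RealPowers

section Measure

variable {X : Type*} [MeasurableSpace X] {μ : Measure X}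

theorem half_integral_le_norm_integral_cexp_mul {P w : X → ℝ} (hP : AEStronglyMeasurable P μ)
    (hw : Integrable w μ) (hw₀ : ∀ x, 0 ≤ w x) (hPw : ∀ x, w x ≠ 0 → |P x| ≤ 1) :
    (∫ x, w x ∂μ) / 2 ≤ ‖∫ x, Complex.exp (P x * Complex.I) * w x ∂μ‖ := by
  have hint : Integrable (fun x => Complex.exp (P x * Complex.I) * w x) μ := by
    refine hw.ofReal.bdd_mul (c := 1) ?_
      (Eventually.of_forall fun x => (Complex.norm_exp_ofReal_mul_I _).le)
    exact Complex.continuous_exp.comp_aestronglyMeasurable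
      ((Complex.continuous_ofReal.comp_aestronglyMeasurable hP).mul_const _)
  have hre (x : X) : (Complex.exp (P x * Complex.I) * w x).re = Real.cos (P x) * w x := by
    rw [Complex.re_mul_ofReal, Complex.exp_ofReal_mul_I_re]
  calc (∫ x, w x ∂μ) / 2 = ∫ x, w x / 2 ∂μ := (integral_div _ _).symm
    _ ≤ ∫ x, (Complex.exp (P x * Complex.I) * w x).re ∂μ := by
        refine integral_mono (hw.div_const _) hint.re fun x => ?_
        change w x / 2 ≤ (Complex.exp (P x * Complex.I) * w x).re
        rw [hre]
        by_cases hx : w x = 0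
        · simp [hx]
        · have hcos := Real.one_sub_sq_div_two_le_cos (x := P x)
          have hsq : P x ^ 2 ≤ 1 := (sq_le_one_iff_abs_le_one _).2 (hPw x hx)
          nlinarith [hw₀ x]
    _ = (∫ x, Complex.exp (P x * Complex.I) * w x ∂μ).re := integral_re hint
    _ ≤ ‖∫ x, Complex.exp (P x * Complex.I) * w x ∂μ‖ := Complex.re_le_norm _

theorem mul_measure_rpow_le_lintegral_rpow {F : X → ℝ≥0∞} {S : Set X} {A : ℝ≥0∞} {q : ℝ}
    (hq : 0 < q) (hS : MeasurableSet S) (hF : ∀ x ∈ S, A ≤ F x) :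
    A * μ S ^ (1 / q) ≤ (∫⁻ x, F x ^ q ∂μ) ^ (1 / q) := by
  calc A * μ S ^ (1 / q) = (A ^ q * μ S) ^ (1 / q) := by
        rw [ENNReal.mul_rpow_of_nonneg _ _ (by positivity), ← ENNReal.rpow_mul,
          mul_one_div_cancel hq.ne', ENNReal.rpow_one]
    _ = (∫⁻ _ in S, A ^ q ∂μ) ^ (1 / q) := by rw [setLIntegral_const]
    _ ≤ (∫⁻ x in S, F x ^ q ∂μ) ^ (1 / q) := by
        gcongr ?_ ^ _
        exact setLIntegral_mono' hS fun x hx => ENNReal.rpow_le_rpow (hF x hx) hq.le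
    _ ≤ (∫⁻ x, F x ^ q ∂μ) ^ (1 / q) := by
        gcongr ?_ ^ _
        exact setLIntegral_le_lintegral _ _

theorem withDensity_abs_rpow_Ioo {α r : ℝ} (hα : 0 < α) (hr : 0 ≤ r) (hr1 : r ≤ 1) :
    (((volume : Measure ℝ).restrict (Ioo 0 1)).withDensity
      fun x => ENNReal.ofReal (|x| ^ (α - 1))) (Ioo 0 r) = ENNReal.ofReal (α⁻¹ * r ^ α) := by
  have hint : IntegrableOn (fun x : ℝ => x ^ (α - 1)) (Ioc 0 r) :=
    (intervalIntegrable_iff_integrableOn_Ioc_of_le hr).1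
      (intervalIntegral.intervalIntegrable_rpow' (by linarith))
  calc _ = ∫⁻ x in Ioo 0 r, ENNReal.ofReal (|x| ^ (α - 1)) := by
        rw [withDensity_apply _ measurableSet_Ioo, Measure.restrict_restrict measurableSet_Ioo,
          inter_eq_left.2 (Ioo_subset_Ioo_right hr1)]
    _ = ∫⁻ x in Ioc 0 r, ENNReal.ofReal (x ^ (α - 1)) := by
        rw [restrict_Ioo_eq_restrict_Ioc]
        exact setLIntegral_congr_fun measurableSet_Ioc fun x hx => by rw [abs_of_pos hx.1]
    _ = ENNReal.ofReal (∫ x in 0..r, x ^ (α - 1)) := by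
        rw [intervalIntegral.integral_of_le hr, ofReal_integral_eq_lintegral_ofReal hint]
        filter_upwards [ae_restrict_mem measurableSet_Ioc] with x hx
        exact Real.rpow_nonneg hx.1.le _
    _ = ENNReal.ofReal (α⁻¹ * r ^ α) := by
        rw [integral_rpow (Or.inl (by linarith)), sub_add_cancel, Real.zero_rpow hα.ne', sub_zero,
          div_eq_inv_mul]

end Measure

section FourierSide

open scoped FourierTransform ContDiff

theorem exists_schwartz_FT_eq {h : ℝ → ℂ} (hsupp : HasCompactSupport h) (hsmooth : ContDiff ℝ ∞ h) :
    ∃ f : SchwartzMap ℝ ℂ, ∀ ξ, FT f ξ = h ξ := by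
  -- Mathlib's `𝓕` has frequency variable `ξ / (2π)`, so `h` is rescaled before it is inverted.
  have hsupp' : HasCompactSupport fun ξ : ℝ => h (2 * Real.pi * ξ) :=
    hsupp.comp_homeomorph (Homeomorph.mulLeft₀ (2 * Real.pi) (by positivity))
  let G : SchwartzMap ℝ ℂ := hsupp'.toSchwartzMap (hsmooth.comp (by fun_prop))
  refine ⟨𝓕⁻ G, fun ξ => ?_⟩
  have hFT : FT (𝓕⁻ G : SchwartzMap ℝ ℂ) ξ =
      𝓕 (𝓕⁻ G : SchwartzMap ℝ ℂ) (ξ / (2 * Real.pi)) := by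
    rw [SchwartzMap.fourier_coe, Real.fourier_real_eq_integral_exp_smul, FT]
    congr 1 with x
    rw [smul_eq_mul]
    congr 2
    push_cast
    have hπ : (Real.pi : ℂ) ≠ 0 := by exact_mod_cast Real.pi_ne_zero
    field_simp
  rw [hFT, FourierTransform.fourier_fourierInv_eq G]
  change h (2 * Real.pi * (ξ / (2 * Real.pi))) = h ξ
  rw [mul_div_cancel₀ _ (by positivity)]

theorem HsNorm_le_of_norm_FT_le_one {s M : ℝ} {f : ℝ → ℂ} {S : Set ℝ}
    (hsupp : ∀ ξ ∉ S, FT f ξ = 0) (hFT : ∀ ξ, ‖FT f ξ‖ ≤ 1)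
    (hM : ∀ ξ ∈ S, (1 + ξ ^ 2) ^ s ≤ M) :
    HsNorm s f ≤ (ENNReal.ofReal M * volume S) ^ (1 / 2 : ℝ) := by
  unfold HsNorm
  gcongr
  calc _ ≤ ∫⁻ ξ, S.indicator (fun _ => ENNReal.ofReal M) ξ := by
        refine lintegral_mono fun ξ => ?_
        by_cases hξ : ξ ∈ S
        · rw [indicator_of_mem hξ]
          have hsq : (‖FT f ξ‖₊ : ℝ≥0∞) ^ 2 ≤ 1 :=
            pow_le_one₀ zero_le (ENNReal.coe_le_one_iff.2 (hFT ξ))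
          exact (mul_le_of_le_one_right zero_le hsq).trans (ENNReal.ofReal_le_ofReal (hM ξ hξ))
        · simp [hsupp ξ hξ]
    _ ≤ ENNReal.ofReal M * volume S := lintegral_indicator_const_le _ _

/-- `f` is a wave packet with frequency profile `χ` focused at the space-time point `(y₀, t₀)`: the
modulation of `f̂` is chosen so that the evolution of `f` at `(y₀, t₀)` is `(2π)⁻¹ ∫ χ`. -/
def IsWavePacket (m y₀ t₀ : ℝ) {a : ℝ} (χ : ContDiffBump a) (f : ℝ → ℂ) : Prop :=
  ∀ ξ, FT f ξ = Complex.exp (((-(y₀ * ξ + t₀ * |ξ| ^ m) : ℝ) : ℂ) * Complex.I) * (χ ξ : ℂ)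

namespace IsWavePacket

variable {m y₀ t₀ a : ℝ} {χ : ContDiffBump a}

theorem exists_schwartz (m y₀ t₀ : ℝ) (hχ : χ.rOut < a) :
    ∃ f : SchwartzMap ℝ ℂ, IsWavePacket m y₀ t₀ χ f := by
  have hsupp : HasCompactSupport fun ξ => (χ ξ : ℂ) :=
    χ.hasCompactSupport.comp_left Complex.ofReal_zero
  refine exists_schwartz_FT_eq hsupp.mul_left (contMDiff_iff_contDiff.1
    (contMDiff_of_tsupport fun ξ hξ => contMDiffAt_iff_contDiffAt.2 ?_))
  have hξ_ball : ξ ∈ Metric.closedBall a χ.rOut :=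
    χ.tsupport_eq ▸ tsupport_comp_subset Complex.ofReal_zero χ (tsupport_mul_subset_right hξ)
  -- `|ξ|^m` is smooth on the support of `χ`, which stays away from the origin.
  have hξ₀ : ξ ≠ 0 := by
    rw [Metric.mem_closedBall, Real.dist_eq, abs_le] at hξ_ball
    linarith
  have habs : ContDiffAt ℝ ∞ (fun ξ : ℝ => |ξ| ^ m) ξ :=
    (contDiffAt_abs hξ₀).rpow_const_of_ne (abs_ne_zero.2 hξ₀)
  have hphase : ContDiffAt ℝ ∞ (fun ξ : ℝ => -(y₀ * ξ + t₀ * |ξ| ^ m)) ξ := by fun_prop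
  have hbump : ContDiffAt ℝ ∞ (fun ξ => (χ ξ : ℂ)) ξ :=
    (Complex.ofRealCLM.contDiff.comp χ.contDiff).contDiffAt
  exact ((Complex.ofRealCLM.contDiff.contDiffAt.comp ξ hphase).mul contDiffAt_const).cexp.mul hbump

variable {f : ℝ → ℂ}

theorem norm_FT (hf : IsWavePacket m y₀ t₀ χ f) (ξ : ℝ) : ‖FT f ξ‖ = χ ξ := by
  rw [hf ξ, norm_mul, Complex.norm_exp_ofReal_mul_I, one_mul, Complex.norm_real,
    Real.norm_of_nonneg χ.nonneg]

theorem HsNorm_le (hf : IsWavePacket m y₀ t₀ χ f) (s : ℝ) (ha : 1 ≤ a) (hχ : χ.rOut ≤ a / 2) :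
    HsNorm s f ≤ ENNReal.ofReal (√(2 * 5 ^ |s| * χ.rOut) * a ^ s) := by
  have ha₀ : 0 < a := by linarith
  have hr := χ.rOut_pos
  have hbound : HsNorm s f ≤
      (ENNReal.ofReal (5 ^ |s| * a ^ (2 * s)) * volume (Metric.closedBall a χ.rOut)) ^
        (1 / 2 : ℝ) := by
    refine HsNorm_le_of_norm_FT_le_one (fun ξ hξ => ?_) (fun ξ => ?_) fun ξ hξ => ?_
    · rw [← norm_eq_zero, hf.norm_FT]
      exact χ.zero_of_le_dist (not_le.1 hξ).le
    · rw [hf.norm_FT]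
      exact χ.le_one
    · exact one_add_sq_rpow_le s ha (hξ.trans hχ)
  refine hbound.trans_eq ?_
  rw [Real.volume_closedBall, ← ENNReal.ofReal_mul (by positivity),
    ENNReal.ofReal_rpow_of_nonneg (by positivity) (by norm_num), ← Real.sqrt_eq_rpow]
  have hsq : 5 ^ |s| * a ^ (2 * s) * (2 * χ.rOut) = 2 * 5 ^ |s| * χ.rOut * (a ^ s) ^ 2 := by
    rw [mul_comm 2 s, Real.rpow_mul ha₀.le, Real.rpow_two]
    ring
  rw [hsq, Real.sqrt_mul (by positivity), Real.sqrt_sq (by positivity)]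

theorem le_norm_uF (hf : IsWavePacket m y₀ t₀ χ f) {y t c : ℝ}
    (hphase : ∀ ξ ∈ Metric.ball a χ.rOut, |(y - y₀) * ξ + (t - t₀) * |ξ| ^ m - c| ≤ 1) :
    χ.rIn / (2 * Real.pi) ≤ ‖uF m f y t‖ := by
  let P (ξ : ℝ) : ℝ := (y - y₀) * ξ + (t - t₀) * |ξ| ^ m - c
  have hintegrand (ξ : ℝ) : Complex.exp (Complex.I * ((y * ξ + t * |ξ| ^ m : ℝ) : ℂ)) * FT f ξ =
      Complex.exp (c * Complex.I) * (Complex.exp (P ξ * Complex.I) * χ ξ) := by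
    rw [hf ξ, ← mul_assoc, ← mul_assoc, ← Complex.exp_add, ← Complex.exp_add]
    congr 2
    simp only [P]
    push_cast
    ring
  have hχ_int : 2 * χ.rIn ≤ ∫ ξ, χ ξ := by
    simpa [measureReal_def, Real.volume_closedBall, χ.rIn_pos.le] using
      χ.measure_closedBall_le_integral volume
  have hosc : (∫ ξ, χ ξ) / 2 ≤ ‖∫ ξ, Complex.exp (P ξ * Complex.I) * χ ξ‖ := by
    refine half_integral_le_norm_integral_cexp_mul ?_ χ.integrable (fun _ => χ.nonneg) fun ξ hξ =>
      hphase ξ (χ.support_eq ▸ Function.mem_support.2 hξ)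
    exact (by fun_prop : Measurable P).aestronglyMeasurable
  simp only [uF, hintegrand]
  rw [integral_const_mul, norm_mul, norm_mul, Complex.norm_exp_ofReal_mul_I, one_mul,
    Complex.norm_real, Real.norm_of_nonneg (by positivity), div_eq_inv_mul]
  gcongr
  linarith

end IsWavePacket

end FourierSide

section Curve

theorem mem_uIcc_zero_of_abs_sub_two_mul_le {x y : ℝ} (h : |y - 2 * x| ≤ |x|) : x ∈ uIcc 0 y := by
  obtain ⟨hlow, hup⟩ := abs_le.1 h
  rw [mem_uIcc]
  rcases le_total 0 x with hx | hx
  · rw [abs_of_nonneg hx] at hlow hup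
    exact Or.inl ⟨hx, by linarith⟩
  · rw [abs_of_nonpos hx] at hlow hup
    exact Or.inr ⟨by linarith, hx⟩

theorem exists_sub_sub_mul_eq_of_hasDerivAt {g : ℝ → ℝ} {g' t₀ : ℝ} {U : Set ℝ}
    (hg : HasDerivAt g g' t₀) (hg' : g' ≠ 0) (hU : U ∈ 𝓝 t₀) (hgU : ContinuousOn g U) :
    ∃ η > 0, ∀ ε x : ℝ, |ε| ≤ η → |x| ≤ η →
      ∃ t ∈ U, |t - t₀| ≤ 2 * |x| / |g'| ∧ g t - g t₀ - ε * (t - t₀) = x := by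
  have hg'₀ : 0 < |g'| := abs_pos.2 hg'
  have hlin : ∀ᶠ t in 𝓝 t₀, |g t - g t₀ - (t - t₀) * g'| ≤ |g'| / 4 * |t - t₀| :=
    hg.isLittleO.def (by positivity)
  obtain ⟨δ, hδ, hball⟩ := Metric.nhds_basis_closedBall.mem_iff.1 (inter_mem hU hlin)
  refine ⟨min (|g'| / 4) (δ * |g'| / 2), by positivity, fun ε x hε hx => ?_⟩
  -- At `t₁` the linear part overshoots `x` by a factor of two, which absorbs both errors.
  set t₁ := t₀ + 2 * x / g'
  have ht₁ : |t₁ - t₀| = 2 * |x| / |g'| := by simp [t₁, abs_div, abs_mul]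
  have ht₁_mul : (t₁ - t₀) * g' = 2 * x := by
    rw [add_sub_cancel_left, div_mul_cancel₀ _ hg']
  have hseg {t : ℝ} (ht : t ∈ uIcc t₀ t₁) : |t - t₀| ≤ 2 * |x| / |g'| :=
    ht₁ ▸ abs_sub_left_of_mem_uIcc ht
  have hseg_ball : uIcc t₀ t₁ ⊆ Metric.closedBall t₀ δ := fun t ht => by
    have hxδ := hx.trans (min_le_right _ _)
    refine (hseg ht).trans ?_
    rw [div_le_iff₀ hg'₀]
    linarith
  have hcont : ContinuousOn (fun t => g t - g t₀ - ε * (t - t₀)) (uIcc t₀ t₁) := by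
    have := hgU.mono (hseg_ball.trans (hball.trans inter_subset_left))
    fun_prop
  have hovershoot : |g t₁ - g t₀ - ε * (t₁ - t₀) - 2 * x| ≤ |x| := by
    have hlin₁ : |g t₁ - g t₀ - (t₁ - t₀) * g'| ≤ |g'| / 4 * |t₁ - t₀| :=
      (hball (hseg_ball right_mem_uIcc)).2
    calc |g t₁ - g t₀ - ε * (t₁ - t₀) - 2 * x|
        = |(g t₁ - g t₀ - (t₁ - t₀) * g') - ε * (t₁ - t₀)| := by rw [ht₁_mul]; ring_nf
      _ ≤ |g'| / 4 * |t₁ - t₀| + |g'| / 4 * |t₁ - t₀| := by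
          refine (abs_sub _ _).trans (add_le_add hlin₁ ?_)
          rw [abs_mul]
          gcongr
          exact hε.trans (min_le_left _ _)
      _ = |x| := by rw [ht₁]; field_simp; ring
  have hx_mem : x ∈ uIcc (g t₀ - g t₀ - ε * (t₀ - t₀)) (g t₁ - g t₀ - ε * (t₁ - t₀)) := by
    rw [sub_self, sub_self, mul_zero, sub_zero]
    exact mem_uIcc_zero_of_abs_sub_two_mul_le hovershoot
  obtain ⟨t, ht, htx⟩ := intermediate_value_uIcc hcont hx_mem
  exact ⟨t, (hball (hseg_ball ht)).1, hseg ht, htx⟩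

end Curve

/-- The maximal function of the evolution of `f` along the curve `t ↦ x - g t`, `t ∈ (0, 1)`. -/
noncomputable def curveMaximal (m : ℝ) (g : ℝ → ℝ) (f : ℝ → ℂ) (x : ℝ) : ℝ≥0∞ :=
  ⨆ t ∈ Ioo (0 : ℝ) 1, (‖uF m f (x - g t) t‖₊ : ℝ≥0∞)

/-- The maximal estimate `H^s → L^q(μ)` along the curve `t ↦ x - g t`, with constant `C`, on
Schwartz data. -/
def CurveMaximalEstimate (m q s : ℝ) (g : ℝ → ℝ) (μ : Measure ℝ) (C : ℝ) : Prop :=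
  ∀ f : SchwartzMap ℝ ℂ,
    (∫⁻ x, curveMaximal m g f x ^ q ∂μ) ^ (1 / q) ≤ ENNReal.ofReal C * HsNorm s f

/-- The outcome of testing a maximal estimate on wave packets of frequency `l` and width `b` at the
positions `x ∈ (0, r)`: one has `√b * r ^ p ≲ l ^ s` as long as `r * l ^ (m - 2) * b ^ 2`, the
oscillation of the phase across the packet, stays below a threshold. -/
def WavePacketScaling (m p s : ℝ) : Prop :=
  ∃ η > 0, ∃ K : ℝ, ∀ᶠ l : ℝ in atTop, ∀ b ∈ Ioc 0 (l / 2), ∀ r ∈ Ioc 0 η,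
    r * l ^ (m - 2) * b ^ 2 ≤ η → √b * r ^ p ≤ K * l ^ s

section WavePacketTest

variable {m g' t₀ : ℝ} {g : ℝ → ℝ}

theorem abs_phase_sub_le {l b ξ τ η : ℝ} (hm : 0 ≤ m) (hm1 : m ≤ 1) (hl : 0 < l) (hb : b ≤ l / 2)
    (hτ : |τ| * l ^ (m - 2) * b ^ 2 ≤ η) (hξ : |ξ - l| ≤ b) :
    |-(m * l ^ (m - 1) * τ) * ξ + τ * |ξ| ^ m - τ * (l ^ m - m * l ^ (m - 1) * l)| ≤ η := by
  have hξ₀ : 0 < ξ := by linarith [(abs_le.1 hξ).1]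
  calc |-(m * l ^ (m - 1) * τ) * ξ + τ * |ξ| ^ m - τ * (l ^ m - m * l ^ (m - 1) * l)|
      = |τ| * |ξ ^ m - l ^ m - m * l ^ (m - 1) * (ξ - l)| := by
        rw [← abs_mul, abs_of_pos hξ₀]
        ring_nf
    _ ≤ |τ| * (l ^ (m - 2) * (ξ - l) ^ 2) := by
        gcongr
        exact abs_rpow_sub_tangent_le hm hm1 hl (hξ.trans hb)
    _ ≤ |τ| * (l ^ (m - 2) * b ^ 2) := by
        rw [← sq_abs (ξ - l)]
        gcongr
    _ ≤ η := by rwa [← mul_assoc]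

theorem exists_forall_le_curveMaximal (hm : 0 ≤ m) (hm1 : m < 1) (ht₀ : t₀ ∈ Ioo 0 1)
    (hg : HasDerivAt g g' t₀) (hg' : g' ≠ 0) (hgc : ContinuousOn g (Ioo 0 1)) :
    ∃ η > 0, ∀ᶠ l : ℝ in atTop, ∀ (χ : ContDiffBump l) (f : ℝ → ℂ) (r : ℝ), χ.rOut ≤ l / 2 →
      IsWavePacket m (-g t₀) t₀ χ f → r ≤ η → r * l ^ (m - 2) * χ.rOut ^ 2 ≤ η →
      ∀ x ∈ Ioo 0 r, ENNReal.ofReal (χ.rIn / (2 * Real.pi)) ≤ curveMaximal m g f x := by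
  obtain ⟨η, hη, hsolve⟩ :=
    exists_sub_sub_mul_eq_of_hasDerivAt hg hg' (Ioo_mem_nhds ht₀.1 ht₀.2) hgc
  have hvel : Tendsto (fun l : ℝ => m * l ^ (m - 1)) atTop (𝓝 0) := by
    simpa using (tendsto_rpow_neg_atTop (sub_pos.2 hm1)).const_mul m
  refine ⟨min η (|g'| / 2), by positivity, ?_⟩
  filter_upwards [hvel.abs.eventually_le_const (by rwa [abs_zero]), eventually_gt_atTop 0]
    with l hvel_l hl χ f r hχ hf hr hosc x hx
  have hx_abs : |x| ≤ r := by rw [abs_of_pos hx.1]; exact hx.2.le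
  obtain ⟨t, ht, htx, hstat⟩ := hsolve (m * l ^ (m - 1)) x hvel_l
    (hx_abs.trans (hr.trans (min_le_left _ _)))
  have hτ : |t - t₀| * l ^ (m - 2) * χ.rOut ^ 2 ≤ 1 := by
    calc |t - t₀| * l ^ (m - 2) * χ.rOut ^ 2 ≤ 2 * r / |g'| * l ^ (m - 2) * χ.rOut ^ 2 := by
          gcongr
          exact htx.trans (by gcongr)
      _ = 2 / |g'| * (r * l ^ (m - 2) * χ.rOut ^ 2) := by ring
      _ ≤ 2 / |g'| * (|g'| / 2) := by gcongr; exact hosc.trans (min_le_right _ _)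
      _ = 1 := by field_simp
  have hdisp : x - g t - -g t₀ = -(m * l ^ (m - 1) * (t - t₀)) := by linarith
  have hlow : χ.rIn / (2 * Real.pi) ≤ ‖uF m f (x - g t) t‖ := hf.le_norm_uF fun ξ hξ => by
    rw [hdisp]
    exact abs_phase_sub_le hm hm1.le hl hχ hτ (Metric.mem_ball.1 hξ).le
  calc ENNReal.ofReal (χ.rIn / (2 * Real.pi)) ≤ ENNReal.ofReal ‖uF m f (x - g t) t‖ :=
        ENNReal.ofReal_le_ofReal hlow
    _ = ‖uF m f (x - g t) t‖₊ := ofReal_norm _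
    _ ≤ curveMaximal m g f x :=
        le_iSup₂ (f := fun t (_ : t ∈ Ioo (0 : ℝ) 1) => (‖uF m f (x - g t) t‖₊ : ℝ≥0∞)) t ht

variable {α c q s C : ℝ} {μ : Measure ℝ}

theorem IsWavePacket.rpow_le_of_curveMaximalEstimate {y₀ l r : ℝ} {χ : ContDiffBump l}
    {f : SchwartzMap ℝ ℂ} (hf : IsWavePacket m y₀ t₀ χ f) (hq : 0 < q) (hC : 0 ≤ C) (hc : 0 ≤ c)
    (hr : 0 ≤ r) (hl : 1 ≤ l) (hχ : χ.rOut ≤ l / 2) (hμ : ENNReal.ofReal (c * r ^ α) ≤ μ (Ioo 0 r))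
    (hlow : ∀ x ∈ Ioo 0 r, ENNReal.ofReal (χ.rIn / (2 * Real.pi)) ≤ curveMaximal m g f x)
    (hest : CurveMaximalEstimate m q s g μ C) :
    χ.rIn / (2 * Real.pi) * (c * r ^ α) ^ (1 / q) ≤ C * (√(2 * 5 ^ |s| * χ.rOut) * l ^ s) := by
  have hrIn := χ.rIn_pos
  rw [← ENNReal.ofReal_le_ofReal_iff (by positivity)]
  calc ENNReal.ofReal (χ.rIn / (2 * Real.pi) * (c * r ^ α) ^ (1 / q))
      = ENNReal.ofReal (χ.rIn / (2 * Real.pi)) * ENNReal.ofReal (c * r ^ α) ^ (1 / q) := by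
        rw [ENNReal.ofReal_mul (by positivity),
          ENNReal.ofReal_rpow_of_nonneg (by positivity) (by positivity)]
    _ ≤ ENNReal.ofReal (χ.rIn / (2 * Real.pi)) * μ (Ioo 0 r) ^ (1 / q) := by gcongr
    _ ≤ (∫⁻ x, curveMaximal m g f x ^ q ∂μ) ^ (1 / q) :=
        mul_measure_rpow_le_lintegral_rpow hq measurableSet_Ioo hlow
    _ ≤ ENNReal.ofReal C * HsNorm s f := hest f
    _ ≤ ENNReal.ofReal C * ENNReal.ofReal (√(2 * 5 ^ |s| * χ.rOut) * l ^ s) := by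
        gcongr
        exact hf.HsNorm_le s hl hχ
    _ = ENNReal.ofReal (C * (√(2 * 5 ^ |s| * χ.rOut) * l ^ s)) := (ENNReal.ofReal_mul hC).symm

theorem CurveMaximalEstimate.wavePacketScaling (hm : 0 ≤ m) (hm1 : m < 1) (hq : 0 < q)
    (ht₀ : t₀ ∈ Ioo 0 1) (hg : HasDerivAt g g' t₀) (hg' : g' ≠ 0)
    (hgc : ContinuousOn g (Ioo 0 1)) (hc : 0 < c)
    (hμ : ∀ r ∈ Ioc 0 1, ENNReal.ofReal (c * r ^ α) ≤ μ (Ioo 0 r)) (hC : 0 ≤ C)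
    (hest : CurveMaximalEstimate m q s g μ C) : WavePacketScaling m (α / q) s := by
  obtain ⟨η, hη, hfocus⟩ := exists_forall_le_curveMaximal hm hm1 ht₀ hg hg' hgc
  refine ⟨min η 1, by positivity, 4 * Real.pi * C * √(2 * 5 ^ |s|) / c ^ (1 / q), ?_⟩
  filter_upwards [hfocus, eventually_ge_atTop 1] with l hfocus_l hl b ⟨hb, hbl⟩ r ⟨hr, hrη⟩ hosc
  let χ : ContDiffBump l := ⟨b / 2, b, by positivity, by linarith⟩
  obtain ⟨f, hf⟩ := IsWavePacket.exists_schwartz (χ := χ) m (-g t₀) t₀ (by linarith : b < l)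
  have hlow := hfocus_l χ f r hbl hf (hrη.trans (min_le_left _ _)) (hosc.trans (min_le_left _ _))
  have htest : b / 2 / (2 * Real.pi) * (c * r ^ α) ^ (1 / q) ≤
      C * (√(2 * 5 ^ |s| * b) * l ^ s) :=
    hf.rpow_le_of_curveMaximalEstimate hq hC hc.le hr.le hl hbl
      (hμ r ⟨hr, hrη.trans (min_le_right _ _)⟩) hlow hest
  rw [Real.mul_rpow hc.le (by positivity), ← Real.rpow_mul hr.le, mul_one_div,
    Real.sqrt_mul (by positivity)] at htest
  rw [div_mul_eq_mul_div, le_div_iff₀ (by positivity)]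
  refine le_of_mul_le_mul_left ?_ (Real.sqrt_pos.2 hb)
  calc √b * (√b * r ^ (α / q) * c ^ (1 / q))
      = 4 * Real.pi * (b / 2 / (2 * Real.pi) * (c ^ (1 / q) * r ^ (α / q))) := by
        rw [← mul_assoc, ← mul_assoc, Real.mul_self_sqrt hb.le]
        field_simp
        ring
    _ ≤ 4 * Real.pi * (C * (√(2 * 5 ^ |s|) * √b * l ^ s)) := by gcongr
    _ = √b * (4 * Real.pi * C * √(2 * 5 ^ |s|) * l ^ s) := by ring

end WavePacketTest

namespace WavePacketScaling

variable {m p s : ℝ}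

theorem half_sub_div_four_le (hm : 0 ≤ m) (h : WavePacketScaling m p s) : 1 / 2 - m / 4 ≤ s := by
  obtain ⟨η, hη, K, hK⟩ := h
  refine le_of_eventually_rpow_le (D := √(1 / 2) * η ^ p) (K := K) (by positivity) ?_
  filter_upwards [hK, eventually_ge_atTop 1] with l hK_l hl
  have hl₀ : 0 < l := by linarith
  have hb : 1 / 2 * l ^ (1 - m / 2) ≤ l / 2 := by
    have := Real.rpow_le_rpow_of_exponent_le hl (by linarith : 1 - m / 2 ≤ 1)
    rw [Real.rpow_one] at this
    linarith
  have hosc : l ^ (m - 2) * (l ^ (1 - m / 2)) ^ 2 = 1 := by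
    rw [← Real.rpow_two, ← Real.rpow_mul hl₀.le, ← Real.rpow_add hl₀,
      show m - 2 + (1 - m / 2) * 2 = 0 by ring, Real.rpow_zero]
  have hsqrt : √(1 / 2 * l ^ (1 - m / 2)) = √(1 / 2) * l ^ (1 / 2 - m / 4) := by
    rw [Real.sqrt_mul (by norm_num), Real.sqrt_eq_rpow (l ^ _), ← Real.rpow_mul hl₀.le]
    ring_nf
  rw [mul_right_comm, ← hsqrt]
  refine hK_l _ ⟨by positivity, hb⟩ η ⟨hη, le_rfl⟩ ?_
  calc η * l ^ (m - 2) * (1 / 2 * l ^ (1 - m / 2)) ^ 2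
      = η / 4 * (l ^ (m - 2) * (l ^ (1 - m / 2)) ^ 2) := by ring
    _ ≤ η := by rw [hosc]; linarith

theorem half_sub_mul_le (hm : 0 ≤ m) (h : WavePacketScaling m p s) : 1 / 2 - m * p ≤ s := by
  obtain ⟨η, hη, K, hK⟩ := h
  refine le_of_eventually_rpow_le (D := √(1 / 2) * η ^ p) (K := K) (by positivity) ?_
  filter_upwards [hK, eventually_ge_atTop 1] with l hK_l hl
  have hl₀ : 0 < l := by linarith
  have hr : η * l ^ (-m) ≤ η :=
    mul_le_of_le_one_right hη.le (Real.rpow_le_one_of_one_le_of_nonpos hl (by linarith))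
  have hosc : l ^ (-m) * l ^ (m - 2) * l ^ 2 = 1 := by
    rw [← Real.rpow_two, ← Real.rpow_add hl₀, ← Real.rpow_add hl₀,
      show -m + (m - 2) + 2 = 0 by ring, Real.rpow_zero]
  have hpow : √(1 / 2 * l) * (η * l ^ (-m)) ^ p = √(1 / 2) * η ^ p * l ^ (1 / 2 - m * p) := by
    rw [Real.sqrt_mul (by norm_num), Real.sqrt_eq_rpow l, Real.mul_rpow hη.le (by positivity),
      ← Real.rpow_mul hl₀.le, sub_eq_add_neg, Real.rpow_add hl₀, neg_mul]
    ring
  rw [← hpow]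
  refine hK_l _ ⟨by positivity, by linarith⟩ _ ⟨by positivity, hr⟩ ?_
  calc η * l ^ (-m) * l ^ (m - 2) * (1 / 2 * l) ^ 2
      = η / 4 * (l ^ (-m) * l ^ (m - 2) * l ^ 2) := by ring
    _ ≤ η := by rw [hosc]; linarith

end WavePacketScaling

theorem stmt6_general {m q s α c g' t₀ : ℝ} {g : ℝ → ℝ} {μ : Measure ℝ} (hm : 0 ≤ m) (hm1 : m < 1)
    (hq : 0 < q) (ht₀ : t₀ ∈ Ioo 0 1) (hg : HasDerivAt g g' t₀) (hg' : g' ≠ 0)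
    (hgc : ContinuousOn g (Ioo 0 1)) (hc : 0 < c)
    (hμ : ∀ r ∈ Ioc 0 1, ENNReal.ofReal (c * r ^ α) ≤ μ (Ioo 0 r))
    (hs : s < max (1 / 2 - m / 4) (1 / 2 - m * α / q)) :
    ¬ ∃ C > 0, CurveMaximalEstimate m q s g μ C := by
  rintro ⟨C, hC, hest⟩
  have hscale := hest.wavePacketScaling hm hm1 hq ht₀ hg hg' hgc hc hμ hC.le
  refine hs.not_ge (max_le (hscale.half_sub_div_four_le hm) ?_)
  rw [mul_div_assoc]
  exact hscale.half_sub_mul_le hm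

/-- Sharpness of the maximal estimate along the non-tangential curve `γ(x,t) = x − θ t^κ`:
if `s < max{1/2 − m/4, 1/2 − mα/q}` then no constant `C` works for the measure
`dμ(x) = |x|^{α−1} dx` restricted to `(0,1)`. -/
theorem stmt6 (m κ θ α q s : ℝ) (hm : 0 < m) (hm1 : m < 1) (hκ : 1 ≤ κ) (hθ : 0 < θ)
    (hα : 0 < α) (hα1 : α ≤ 1) (hq : 2 ≤ q)
    (hs : s < max (1 / 2 - m / 4) (1 / 2 - m * α / q)) :
    ¬ ∃ C > 0, ∀ f : SchwartzMap ℝ ℂ,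
      (∫⁻ x : ℝ, (⨆ t ∈ Set.Ioo (0:ℝ) 1, (‖uF m (⇑f) (x - θ * t ^ κ) t‖₊ : ℝ≥0∞)) ^ q
          ∂(((volume : Measure ℝ).restrict (Set.Ioo (0:ℝ) 1)).withDensity
              fun x => ENNReal.ofReal (|x| ^ (α - 1)))) ^ (1 / q) ≤
        ENNReal.ofReal C * HsNorm s (⇑f) :=
  stmt6_general hm.le hm1 (by linarith) (t₀ := 1 / 2) (by norm_num)
    ((Real.hasDerivAt_rpow_const (Or.inl (by norm_num))).const_mul θ) (by positivity)
    (continuous_const.mul (Real.continuous_rpow_const (by linarith))).continuousOn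
    (inv_pos.2 hα) (fun _ hr => (withDensity_abs_rpow_Ioo hα hr.1.le hr.2).ge) hs
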